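/- arXiv:math/0702664 — 2 statements merged into one kernel-verified Lean document; each statement's English description precedes it below -/
import Mathlib

section
/- Define Ω_{−4,1}(X,Y)(f) = 2X^(4)Y″f′ + 3X‴Y″f″ − (X↔Y) and Ω̃_{−4,1}(X,Y)(f) = 12X^(6)Y′f + 22X^(5)Y′f′ + 5X^(4)Y′f″ + 10X′Y‴f‴ + 5X′Y″f^(4) − (X↔Y), where −(X↔Y) means subtracting the same expression with X and Y exchanged. Then Ω_{−4,1} = −[[C_{−1,1}, C_{−4,−1}]] (with C_{−1,1}(X)(f) = X‴f + 2X″f′ valued in D_{−1,1} and C_{−4,−1}(X)(f) = X‴f′ + X″f″ valued in D_{−4,−1}), Ω̃_{−4,1} = −[[C_{1,1}, C_{−4,1}]] (with C_{1,1}(X)(f) = X′f valued in D_{1,1} and C_{−4,1}(X)(f) = 12X^(6)f + 22X^(5)f′ + 5X^(4)f″ − 10X‴f‴ − 5X″f^(4) valued in D_{−4,1}), and both Ω_{−4,1} and Ω̃_{−4,1} are 2-cocycles on Vect(1) with values in D_{−4,1}. -/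
noncomputable section

/-- Polynomials over ℝ, identified with polynomial vector fields / densities on the line. -/
abbrev P : Type := Polynomial ℝ

/-- Derivative d/dx. -/
def D : P → P := fun f => Polynomial.derivative f

/-- Iterated derivative: `Dk k f = f^(k)`. -/
def Dk (k : ℕ) : P → P := D^[k]

/-- Lie bracket on Vect(1): [X,Y] = XY' - X'Y. -/
def br (X Y : P) : P := X * D Y - D X * Y

/-- Action of the vector field X on λ-densities: `L_X^λ f = X f' + λ X' f`. -/
def Lw (l : ℝ) (X f : P) : P := X * D f + Polynomial.C l * D X * f

/-- Action on operators from F_ν to F_μ: `L_X^{ν,μ}(A) = L_X^μ ∘ A - A ∘ L_X^ν`. -/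
def LD (nu mu : ℝ) (X : P) (A : P → P) (f : P) : P := Lw mu X (A f) - A (Lw nu X f)

/-- 1-cocycle condition with values in D_{ν,μ}. -/
def IsCocycle1 (nu mu : ℝ) (c : P → P → P) : Prop :=
  ∀ X Y f, c (br X Y) f = LD nu mu X (c Y) f - LD nu mu Y (c X) f

/-- 2-cocycle condition with values in D_{ν,μ}. -/
def IsCocycle2 (nu mu : ℝ) (o : P → P → P → P) : Prop :=
  ∀ X Y Z f,
    LD nu mu X (o Y Z) f - LD nu mu Y (o X Z) f + LD nu mu Z (o X Y) f
      - o (br X Y) Z f + o (br X Z) Y f - o (br Y Z) X f = 0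

/-- Cup product of 1-cochains: `[[C₁,C₂]](X,Y) = C₁(X)∘C₂(Y) - C₁(Y)∘C₂(X)`. -/
def cup (c₁ c₂ : P → P → P) (X Y f : P) : P := c₁ X (c₂ Y f) - c₁ Y (c₂ X f)

/-- Coboundary of a 1-cochain b with values in D_{ν,μ}. -/
def cob (nu mu : ℝ) (b : P → P → P) (X Y f : P) : P :=
  LD nu mu X (b Y) f - LD nu mu Y (b X) f - b (br X Y) f


/-- Half of the 2-cocycle `Ω_{-4,1}`. -/
def term14a (X Y f : P) : P := 2 * Dk 4 X * Dk 2 Y * D f + 3 * Dk 3 X * Dk 2 Y * Dk 2 f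

/-- Half of the 2-cocycle `Ω̃_{-4,1}`. -/
def term14b (X Y f : P) : P :=
  12 * Dk 6 X * D Y * f + 22 * Dk 5 X * D Y * D f + 5 * Dk 4 X * D Y * Dk 2 f
    + 10 * D X * Dk 3 Y * Dk 3 f + 5 * D X * Dk 2 Y * Dk 4 f

/-!
By the Leibniz rule for the Lie derivative of a composition of differential operators, the cup
product of two 1-cocycles is a 2-cocycle. Both `Ω_{-4,1}` and `Ω̃_{-4,1}` are negatives of cup
products, so it remains to see that the four factors are 1-cocycles. For each factor `C`, expanding
`L_X (C Y)` by the Leibniz rule leaves few terms; those symmetric in `X` and `Y` cancel in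
`L_X (C Y) - L_Y (C X)`, and the others add up to `C [X, Y]`.
-/

section Derivatives

lemma D_eq_Dk_one (f : P) : D f = Dk 1 f := rfl

lemma Dk_zero (f : P) : Dk 0 f = f := rfl

lemma Dk_Dk (i j : ℕ) (f : P) : Dk i (Dk j f) = Dk (i + j) f :=
  (Function.iterate_add_apply D i j f).symm

lemma Dk_add (k : ℕ) (f g : P) : Dk k (f + g) = Dk k f + Dk k g :=
  iterate_map_add Polynomial.derivative k f g

lemma Dk_sub (k : ℕ) (f g : P) : Dk k (f - g) = Dk k f - Dk k g :=
  Polynomial.iterate_derivative_sub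

lemma Dk_C_mul (k : ℕ) (a : ℝ) (f : P) : Dk k (Polynomial.C a * f) = Polynomial.C a * Dk k f :=
  Polynomial.iterate_derivative_C_mul a f k

lemma Dk_ofNat_mul (k a : ℕ) [a.AtLeastTwo] (f : P) :
    Dk k (ofNat(a) * f) = ofNat(a) * Dk k f :=
  Dk_C_mul k ofNat(a) f

lemma Dk_mul (k : ℕ) (f g : P) :
    Dk k (f * g) = ∑ i ∈ Finset.range (k + 1), k.choose i • (Dk (k - i) f * Dk i g) :=
  Polynomial.iterate_derivative_mul f g

lemma Dk_br (k : ℕ) (X Y : P) :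
    Dk k (br X Y) = ∑ i ∈ Finset.range (k + 1), k.choose i •
      (Dk (k - i) X * Dk (i + 1) Y - Dk (k - i + 1) X * Dk i Y) := by
  rw [br, Dk_sub, Dk_mul, Dk_mul, ← Finset.sum_sub_distrib]
  simp only [D_eq_Dk_one, Dk_Dk, smul_sub]

lemma Dk_Lw (k : ℕ) (l : ℝ) (X f : P) :
    Dk k (Lw l X f) = ∑ i ∈ Finset.range (k + 1), k.choose i •
      (Dk (k - i) X * Dk (i + 1) f + Polynomial.C l * (Dk (k - i + 1) X * Dk i f)) := by
  rw [Lw, mul_assoc, Dk_add, Dk_C_mul, Dk_mul, Dk_mul, Finset.mul_sum, ← Finset.sum_add_distrib]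
  simp only [D_eq_Dk_one, Dk_Dk, mul_smul_comm, smul_add]

end Derivatives

section CupProduct

variable {l m n : ℝ}

lemma Lw_sub (l : ℝ) (X f g : P) : Lw l X (f - g) = Lw l X f - Lw l X g := by
  simp only [Lw, D_eq_Dk_one, Dk_sub]
  ring

lemma LD_sub (A B : P → P) (X f : P) :
    LD l m X (fun f => A f - B f) f = LD l m X A f - LD l m X B f := by
  simp only [LD, Lw_sub]
  ring

lemma LD_neg (A : P → P) (X f : P) : LD l m X (fun f => -A f) f = -LD l m X A f := by
  simpa [LD, Lw, D] using LD_sub (l := l) (m := m) (fun _ => 0) A X f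

lemma LD_comp {A : P → P} (hA : ∀ f g, A (f - g) = A f - A g) (B : P → P) (X f : P) :
    LD l n X (fun f => A (B f)) f = LD m n X A (B f) + A (LD l m X B f) := by
  simp only [LD, hA]
  ring

lemma LD_cup {c₁ : P → P → P} (hsub : ∀ X f g, c₁ X (f - g) = c₁ X f - c₁ X g)
    (c₂ : P → P → P) (X Y Z f : P) :
    LD l n X (cup c₁ c₂ Y Z) f =
      LD m n X (c₁ Y) (c₂ Z f) + c₁ Y (LD l m X (c₂ Z) f)
        - (LD m n X (c₁ Z) (c₂ Y f) + c₁ Z (LD l m X (c₂ Y) f)) := by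
  rw [← LD_comp (hsub Y), ← LD_comp (hsub Z)]
  exact LD_sub (fun f => c₁ Y (c₂ Z f)) (fun f => c₁ Z (c₂ Y f)) X f

theorem IsCocycle1.isCocycle2_cup {c₁ c₂ : P → P → P} (h₁ : IsCocycle1 m n c₁)
    (h₂ : IsCocycle1 l m c₂) (hsub : ∀ X f g, c₁ X (f - g) = c₁ X f - c₁ X g) :
    IsCocycle2 l n (cup c₁ c₂) := by
  intro X Y Z f
  simp only [LD_cup (m := m) hsub, cup, h₁ _ _ _, h₂ _ _ _, hsub]
  ring

theorem IsCocycle2.neg {o : P → P → P → P} (ho : IsCocycle2 l m o) :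
    IsCocycle2 l m (fun X Y f => -o X Y f) := by
  intro X Y Z f
  simp only [LD_neg]
  linear_combination -ho X Y Z f

end CupProduct

section Cocycles

variable {l m : ℝ}

/-- The 1-cochain `C_{1,1}`, which preserves the weight of densities. -/
def cochainZero (X f : P) : P := D X * f

/-- The 1-cochain `C_{-1,1}`, which raises the weight of densities by two. -/
def cochainTwo (X f : P) : P := Dk 3 X * f + 2 * Dk 2 X * D f

/-- The 1-cochain `C_{-4,-1}`, which raises the weight of densities by three. -/
def cochainThree (X f : P) : P := Dk 3 X * D f + Dk 2 X * Dk 2 f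

/-- The 1-cochain `C_{-4,1}`, which raises the weight of densities by five. -/
def cochainFive (X f : P) : P :=
  12 * Dk 6 X * f + 22 * Dk 5 X * D f + 5 * Dk 4 X * Dk 2 f
    - 10 * Dk 3 X * Dk 3 f - 5 * Dk 2 X * Dk 4 f

lemma cochainZero_sub (X f g : P) :
    cochainZero X (f - g) = cochainZero X f - cochainZero X g :=
  mul_sub _ _ _

lemma cochainTwo_sub (X f g : P) :
    cochainTwo X (f - g) = cochainTwo X f - cochainTwo X g := by
  simp only [cochainTwo, D_eq_Dk_one, Dk_sub]
  ring

lemma LD_cochainZero (l : ℝ) (X Y f : P) :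
    LD l l X (cochainZero Y) f = X * Dk 2 Y * f := by
  simp only [LD, Lw, cochainZero, D_eq_Dk_one, Dk_mul, Dk_Dk, Dk_zero, Finset.sum_range_succ,
    Finset.sum_range_zero, Nat.choose, Nat.reduceAdd, Nat.reduceSub]
  ring

lemma LD_cochainTwo (h : m = l + 2) (X Y f : P) :
    LD l m X (cochainTwo Y) f =
      (X * Dk 4 Y + 2 * D X * Dk 3 Y - 2 * Polynomial.C l * Dk 2 X * Dk 2 Y) * f
        + 2 * (X * Dk 3 Y + D X * Dk 2 Y) * D f := by
  simp only [LD, cochainTwo, D_eq_Dk_one, Dk_Lw]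
  simp only [Lw, D_eq_Dk_one, Dk_add, mul_assoc, Dk_ofNat_mul, Dk_mul, Dk_Dk, Dk_zero,
    Finset.sum_range_succ, Finset.sum_range_zero, Nat.choose, Nat.reduceAdd, Nat.reduceSub,
    h, map_add, map_ofNat]
  ring

lemma LD_cochainThree (h : m = l + 3) (X Y f : P) :
    LD l m X (cochainThree Y) f =
      (X * Dk 3 Y + D X * Dk 2 Y) * Dk 2 f
        + (X * Dk 4 Y + 2 * D X * Dk 3 Y - (2 * Polynomial.C l + 1) * Dk 2 X * Dk 2 Y) * D f
        - Polynomial.C l * (Dk 3 X * Dk 2 Y + Dk 2 X * Dk 3 Y) * f := by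
  simp only [LD, cochainThree, D_eq_Dk_one, Dk_Lw]
  simp only [Lw, D_eq_Dk_one, Dk_add, mul_assoc, Dk_mul, Dk_Dk, Dk_zero,
    Finset.sum_range_succ, Finset.sum_range_zero, Nat.choose, Nat.reduceAdd, Nat.reduceSub,
    h, map_add, map_ofNat]
  ring

lemma LD_cochainFive (X Y f : P) :
    LD (-4) 1 X (cochainFive Y) f =
      (12 * X * Dk 7 Y + 60 * D X * Dk 6 Y + 88 * Dk 2 X * Dk 5 Y + 20 * Dk 3 X * Dk 4 Y
          - 40 * Dk 4 X * Dk 3 Y - 20 * Dk 5 X * Dk 2 Y) * f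
        + (22 * X * Dk 6 Y + 88 * D X * Dk 5 Y + 35 * Dk 2 X * Dk 4 Y
          - 110 * Dk 3 X * Dk 3 Y - 75 * Dk 4 X * Dk 2 Y) * D f
        + (5 * X * Dk 5 Y + 15 * D X * Dk 4 Y - 90 * Dk 2 X * Dk 3 Y
          - 100 * Dk 3 X * Dk 2 Y) * Dk 2 f
        - (10 * X * Dk 4 Y + 20 * D X * Dk 3 Y + 50 * Dk 2 X * Dk 2 Y) * Dk 3 f
        - (5 * X * Dk 3 Y + 5 * D X * Dk 2 Y) * Dk 4 f := by
  simp only [LD, cochainFive, D_eq_Dk_one, Dk_Lw]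
  simp only [Lw, D_eq_Dk_one, Dk_add, Dk_sub, mul_assoc, Dk_ofNat_mul, Dk_mul, Dk_Dk, Dk_zero,
    Finset.sum_range_succ, Finset.sum_range_zero, Nat.choose, Nat.reduceAdd, Nat.reduceSub,
    map_neg, map_one, map_ofNat]
  ring

theorem isCocycle1_cochainZero (l : ℝ) : IsCocycle1 l l cochainZero := by
  intro X Y f
  simp only [LD_cochainZero, cochainZero, D_eq_Dk_one, Dk_br, Dk_zero, Finset.sum_range_succ,
    Finset.sum_range_zero, Nat.choose, Nat.reduceAdd, Nat.reduceSub]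
  ring

theorem isCocycle1_cochainTwo (h : m = l + 2) : IsCocycle1 l m cochainTwo := by
  intro X Y f
  simp only [LD_cochainTwo h, cochainTwo, D_eq_Dk_one, Dk_br, Dk_zero, Finset.sum_range_succ,
    Finset.sum_range_zero, Nat.choose, Nat.reduceAdd, Nat.reduceSub]
  ring

theorem isCocycle1_cochainThree (h : m = l + 3) : IsCocycle1 l m cochainThree := by
  intro X Y f
  simp only [LD_cochainThree h, cochainThree, D_eq_Dk_one, Dk_br, Dk_zero, Finset.sum_range_succ,
    Finset.sum_range_zero, Nat.choose, Nat.reduceAdd, Nat.reduceSub]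
  ring

theorem isCocycle1_cochainFive : IsCocycle1 (-4) 1 cochainFive := by
  intro X Y f
  simp only [LD_cochainFive, cochainFive, D_eq_Dk_one, Dk_br, Dk_zero, Finset.sum_range_succ,
    Finset.sum_range_zero, Nat.choose, Nat.reduceAdd, Nat.reduceSub]
  ring

end Cocycles

lemma term14a_sub_swap (X Y f : P) :
    term14a X Y f - term14a Y X f = -cup cochainTwo cochainThree X Y f := by
  simp only [term14a, cup, cochainTwo, cochainThree, D_eq_Dk_one, Dk_add, Dk_mul, Dk_Dk,
    Finset.sum_range_succ, Finset.sum_range_zero, Nat.choose, Nat.reduceAdd, Nat.reduceSub]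
  ring

lemma term14b_sub_swap (X Y f : P) :
    term14b X Y f - term14b Y X f = -cup cochainZero cochainFive X Y f := by
  simp only [term14b, cup, cochainZero, cochainFive]
  ring

theorem Om41_two_cocycles_general {l m : ℝ} (h : m = l + 5) :
    (∀ X Y f : P, term14a X Y f - term14a Y X f = -cup cochainTwo cochainThree X Y f) ∧
    (∀ X Y f : P, term14b X Y f - term14b Y X f = -cup cochainZero cochainFive X Y f) ∧
    IsCocycle2 l m (fun X Y f => term14a X Y f - term14a Y X f) ∧
    IsCocycle2 (-4) 1 (fun X Y f => term14b X Y f - term14b Y X f) := by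
  refine ⟨term14a_sub_swap, term14b_sub_swap, ?_, ?_⟩
  · have hTwo : IsCocycle1 (l + 3) m cochainTwo := isCocycle1_cochainTwo (by linarith)
    have hThree : IsCocycle1 l (l + 3) cochainThree := isCocycle1_cochainThree rfl
    simpa only [term14a_sub_swap] using (hTwo.isCocycle2_cup hThree cochainTwo_sub).neg
  · have hZero : IsCocycle1 1 1 cochainZero := isCocycle1_cochainZero 1
    simpa only [term14b_sub_swap] using
      (hZero.isCocycle2_cup isCocycle1_cochainFive cochainZero_sub).neg

/-- `Ω_{-4,1} = -[[C_{-1,1},C_{-4,-1}]]` and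
`Ω̃_{-4,1} = -[[C_{1,1},C_{-4,1}]]` are 2-cocycles with values in `D_{-4,1}`. -/
theorem Om41_two_cocycles :
    (∀ X Y f : P, term14a X Y f - term14a Y X f =
      - cup (fun X f => Dk 3 X * f + 2 * Dk 2 X * D f)
          (fun X f => Dk 3 X * D f + Dk 2 X * Dk 2 f) X Y f) ∧
    (∀ X Y f : P, term14b X Y f - term14b Y X f =
      - cup (fun X f => D X * f)
          (fun X f => 12 * Dk 6 X * f + 22 * Dk 5 X * D f + 5 * Dk 4 X * Dk 2 f
            - 10 * Dk 3 X * Dk 3 f - 5 * Dk 2 X * Dk 4 f) X Y f) ∧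
    IsCocycle2 (-4) 1 (fun X Y f => term14a X Y f - term14a Y X f) ∧
    IsCocycle2 (-4) 1 (fun X Y f => term14b X Y f - term14b Y X f) :=
  Om41_two_cocycles_general (by norm_num)
end
end

section
/- For every λ ∈ ℝ, the cup product [[C_{λ+2,λ+4}, C_{λ,λ+2}]] (with C_{λ+2,λ+4}(X)(f) = X‴f + 2X″f′ valued in D_{λ+2,λ+4} and C_{λ,λ+2}(X)(f) = X‴f + 2X″f′ valued in D_{λ,λ+2}) is a 2-coboundary with values in D_{λ,λ+4}: there exist constants c₁, c₂ ∈ ℝ (one may take (c₁,c₂) = ±((2/5)(λ−1), −2)) such that [[C_{λ+2,λ+4}, C_{λ,λ+2}]] = ∂b for the 1-cochain b(X)(f) = c₁X^(5)f + c₂X^(4)f′, where ∂ is taken with ν = λ, μ = λ+4. -/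
/-!
The operator `f ↦ X‴f + 2X″f′` is twice the action `L_{X″}` on densities of weight `1/2`. Since
`X ↦ L_X` is a representation, the cup product is therefore `4 L_W f = 4Wf′ + 2W′f` at weight `1/2`,
where `W = [X″, Y″]`.

On the other side, consider the `1`-cochain `X ↦ X^(k)` with values in `F_{k-1}`. Since
`D ∘ L_X^δ = L_X^{δ+1} ∘ D + δX″`, its coboundary for `k + 1` is determined by that for `k`: it
vanishes for `k = 1, 2, 3`, and equals `-2W` for `k = 4` and `-5W′` for `k = 5`. Hence
`∂(c₁X^(5)f + c₂X^(4)f′) = -2c₂Wf′ - (5c₁ + λc₂)W′f`, and comparing coefficients gives `c₂ = -2` and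
`c₁ = (2/5)(λ - 1)`.
-/

noncomputable section

open Polynomial

lemma D_add (f g : P) : D (f + g) = D f + D g := derivative_add

lemma D_sub (f g : P) : D (f - g) = D f - D g := derivative_sub

lemma D_mul (f g : P) : D (f * g) = D f * g + f * D g := derivative_mul

lemma D_C (c : ℝ) : D (C c) = 0 := derivative_C

lemma D_C_mul (c : ℝ) (f : P) : D (C c * f) = C c * D f := derivative_C_mul c f

lemma Dk_succ (k : ℕ) (X : P) : Dk (k + 1) X = D (Dk k X) :=
  Function.iterate_succ_apply' D k X

lemma Dk_two (X : P) : Dk 2 X = D (D X) := rfl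

lemma D_br (X Y : P) : D (br X Y) = X * Dk 2 Y - Dk 2 X * Y := by
  simp only [br, D_sub, D_mul, Dk_two]
  ring

lemma D_br_Dk_two (X Y : P) :
    D (br (Dk 2 X) (Dk 2 Y)) = Dk 2 X * Dk 4 Y - Dk 4 X * Dk 2 Y := by
  simp only [D_br, Dk, ← Function.iterate_add_apply, Nat.reduceAdd]

section Lw

variable (l c : ℝ) (X Y f : P)

lemma Lw_C_mul : Lw l X (C c * f) = C c * Lw l X f := by
  simp only [Lw, D_C_mul]
  ring

lemma Lw_Lw_sub_Lw_Lw : Lw l X (Lw l Y f) - Lw l Y (Lw l X f) = Lw l (br X Y) f := by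
  simp only [Lw, br, D_add, D_sub, D_mul, D_C]
  ring

lemma D_Lw : D (Lw l X f) = Lw (l + 1) X (D f) + C l * Dk 2 X * f := by
  simp only [Lw, D_add, D_mul, D_C, C_add, C_1, Dk_two]
  ring

lemma cup_C_mul_Lw (φ : P → P) :
    cup (fun X f => C c * Lw l (φ X) f) (fun X f => C c * Lw l (φ X) f) X Y f =
      C (c ^ 2) * Lw l (br (φ X) (φ Y)) f := by
  simp only [cup, Lw_C_mul, ← Lw_Lw_sub_Lw_Lw, C_pow]
  ring

lemma Dk_three_mul_add_two_mul_Dk_two_mul_D :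
    Dk 3 X * f + 2 * Dk 2 X * D f = C 2 * Lw (1 / 2) (Dk 2 X) f := by
  have two_mul_half : (C 2 : P) * C (1 / 2) = 1 := by rw [← C_mul]; norm_num
  rw [Dk_succ 2, Lw, ← C_ofNat 2]
  linear_combination (-D (Dk 2 X) * f) * two_mul_half

end Lw

/-- The coboundary of a `1`-cochain `φ` on `Vect(1)` with values in the density module `F_δ`. -/
def densityCob (δ : ℝ) (φ : P → P) (X Y : P) : P :=
  Lw δ X (φ Y) - Lw δ Y (φ X) - φ (br X Y)

section densityCob

variable (X Y : P)

lemma densityCob_C_mul (δ c : ℝ) (φ : P → P) :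
    densityCob δ (fun X => C c * φ X) X Y = C c * densityCob δ φ X Y := by
  simp only [densityCob, Lw_C_mul]
  ring

lemma densityCob_Dk_succ (δ : ℝ) (k : ℕ) :
    densityCob (δ + 1) (Dk (k + 1)) X Y =
      D (densityCob δ (Dk k) X Y) - C δ * (Dk 2 X * Dk k Y - Dk 2 Y * Dk k X) := by
  simp only [densityCob, Dk_succ, D_sub, D_Lw]
  ring

lemma densityCob_Dk_zero : densityCob (-1) (Dk 0) X Y = br X Y := by
  simp only [densityCob, Dk, Function.iterate_zero, id, Lw, br, C_neg, C_1]
  ring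

lemma densityCob_Dk_one : densityCob 0 (Dk 1) X Y = 0 := by
  have h := densityCob_Dk_succ X Y (-1) 0
  rw [densityCob_Dk_zero, D_br, neg_add_cancel] at h
  rw [h, C_neg, C_1]
  simp only [Dk, Function.iterate_zero, id]
  ring

lemma densityCob_Dk_two : densityCob 1 (Dk 2) X Y = 0 := by
  simpa [densityCob_Dk_one, D] using densityCob_Dk_succ X Y 0 1

lemma densityCob_Dk_three : densityCob 2 (Dk 3) X Y = 0 := by
  have h := densityCob_Dk_succ X Y 1 2
  rw [densityCob_Dk_two, one_add_one_eq_two] at h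
  rw [h, D, derivative_zero]
  ring

lemma densityCob_Dk_four :
    densityCob 3 (Dk 4) X Y = C (-2) * br (Dk 2 X) (Dk 2 Y) := by
  have h := densityCob_Dk_succ X Y 2 3
  rw [densityCob_Dk_three, two_add_one_eq_three] at h
  rw [h, br, ← Dk_succ, ← Dk_succ, D, derivative_zero, C_neg]
  ring

lemma densityCob_Dk_five :
    densityCob 4 (Dk 5) X Y = C (-5) * D (br (Dk 2 X) (Dk 2 Y)) := by
  have h := densityCob_Dk_succ X Y 3 4
  rw [densityCob_Dk_four, three_add_one_eq_four, D_C_mul] at h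
  have C_neg_five : (C (-5) : P) = C (-2) - C 3 := by rw [← C_sub]; norm_num
  rw [h, D_br_Dk_two, C_neg_five]
  ring

end densityCob

section FirstOrder

variable (nu mu : ℝ) (X Y f : P)

lemma LD_mul_add_mul_D (a b : P) :
    LD nu mu X (fun f => a * f + b * D f) f =
      (Lw (mu - nu) X a - C nu * Dk 2 X * b) * f + Lw (mu - nu - 1) X b * D f := by
  simp only [LD, Lw, D_add, D_mul, D_C, C_sub, C_1, Dk_two]
  ring

lemma cob_mul_add_mul_D (φ ψ : P → P) :
    cob nu mu (fun X f => φ X * f + ψ X * D f) X Y f =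
      (densityCob (mu - nu) φ X Y - C nu * (Dk 2 X * ψ Y - Dk 2 Y * ψ X)) * f +
        densityCob (mu - nu - 1) ψ X Y * D f := by
  simp only [cob, LD_mul_add_mul_D, densityCob]
  ring

lemma cob_Dk_five_mul_add_Dk_four_mul_D (c1 c2 : ℝ) :
    cob nu (nu + 4) (fun X f => C c1 * Dk 5 X * f + C c2 * Dk 4 X * D f) X Y f =
      C (-2 * c2) * br (Dk 2 X) (Dk 2 Y) * D f
        - C (5 * c1 + nu * c2) * D (br (Dk 2 X) (Dk 2 Y)) * f := by
  have weight_five : nu + 4 - nu = 4 := by ring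
  have weight_four : (4 : ℝ) - 1 = 3 := by norm_num
  rw [cob_mul_add_mul_D nu (nu + 4) X Y f (fun X => C c1 * Dk 5 X) (fun X => C c2 * Dk 4 X),
    weight_five, weight_four, densityCob_C_mul, densityCob_C_mul, densityCob_Dk_four,
    densityCob_Dk_five, D_br_Dk_two]
  simp only [C_add, C_mul, C_neg]
  ring

end FirstOrder

/-- `[[C_{λ+2,λ+4},C_{λ,λ+2}]]` is a 2-coboundary with values in
`D_{λ,λ+4}`, with 1-cochain `b(X)(f) = c₁X^(5)f + c₂X^(4)f′` where
`(c₁,c₂) = ±((2/5)(λ-1), -2)`. -/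
theorem cup_order_four_is_coboundary (l : ℝ) :
    ∃ c1 c2 : ℝ,
      ((c1 = 2 / 5 * (l - 1) ∧ c2 = -2) ∨ (c1 = -(2 / 5 * (l - 1)) ∧ c2 = 2)) ∧
      ∀ X Y f : P,
        cup (fun X f => Dk 3 X * f + 2 * Dk 2 X * D f)
            (fun X f => Dk 3 X * f + 2 * Dk 2 X * D f) X Y f
          = cob l (l + 4)
              (fun X f => Polynomial.C c1 * Dk 5 X * f + Polynomial.C c2 * Dk 4 X * D f)
              X Y f := by
  refine ⟨2 / 5 * (l - 1), -2, Or.inl ⟨rfl, rfl⟩, fun X Y f => ?_⟩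
  have coeff_D_bracket : 5 * (2 / 5 * (l - 1)) + l * (-2) = -(2 ^ 2 * (1 / 2)) := by ring
  have coeff_bracket : (-2 : ℝ) * (-2) = 2 ^ 2 := by norm_num
  simp only [Dk_three_mul_add_two_mul_Dk_two_mul_D]
  rw [cup_C_mul_Lw, cob_Dk_five_mul_add_Dk_four_mul_D, coeff_D_bracket, coeff_bracket, Lw,
    C_neg, C_mul]
  ring
end
end
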